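/- (Sequentialization) Let G be any bl-graph that is total with respect to a sharing-free named sequent ⊢Γ. Then there is a named GS4 derivation P with conclusion ⊢Γ such that ⟨⟨P⟩⟩ = G. -/

import Mathlib

open scoped Classical

noncomputable section

namespace GS4

/-- Named classical propositional formulas over atoms `α`, with names in `ℕ`. -/
inductive NForm (α : Type) : Type
  | atom : ℕ → α → NForm α
  | or   : NForm α → NForm α → NForm α
  | and  : NForm α → NForm α → NForm α

variable {α : Type}

/-- Name-preserving De Morgan negation, w.r.t. an involution `bar` on atoms. -/
def negF (bar : α → α) : NForm α → NForm α
  | .atom x a => .atom x (bar a)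
  | .or A B => .and (negF bar A) (negF bar B)
  | .and A B => .or (negF bar A) (negF bar B)

/-- The set of names occurring in a named formula. -/
def NForm.names : NForm α → Set ℕ
  | .atom x _ => {x}
  | .or A B => A.names ∪ B.names
  | .and A B => A.names ∪ B.names

/-- A named formula is sharing-free if every name occurs at most once in it. -/
def NForm.sharingFree : NForm α → Prop
  | .atom _ _ => True
  | .or A B => A.sharingFree ∧ B.sharingFree ∧ Disjoint A.names B.names
  | .and A B => A.sharingFree ∧ B.sharingFree ∧ Disjoint A.names B.names

def NForm.isAtom : NForm α → Prop
  | .atom _ _ => True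
  | _ => False

/-- Anonymous formulas (shapes): `A ≡ B` iff their shapes coincide. -/
inductive Shape (α : Type) : Type
  | atom : α → Shape α
  | or   : Shape α → Shape α → Shape α
  | and  : Shape α → Shape α → Shape α

def NForm.shape : NForm α → Shape α
  | .atom _ a => .atom a
  | .or A B => .or A.shape B.shape
  | .and A B => .and A.shape B.shape

/-- `HasAtom A x a`: the atomic formula `x:a` occurs in `A`. -/
def HasAtom : NForm α → ℕ → α → Prop
  | .atom y b, x, a => y = x ∧ b = a
  | .or A B, x, a => HasAtom A x a ∨ HasAtom B x a
  | .and A B, x, a => HasAtom A x a ∨ HasAtom B x a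

/-- Names of a finite set of named formulas. -/
def snames (Γ : Finset (NForm α)) : Set ℕ := ⋃ A ∈ Γ, A.names

/-- A finite set of named formulas is sharing-free if all its elements are
sharing-free with pairwise disjoint name sets. -/
def SFSet (Γ : Finset (NForm α)) : Prop :=
  (∀ A ∈ Γ, A.sharingFree) ∧
  ∀ A ∈ Γ, ∀ B ∈ Γ, A ≠ B → Disjoint A.names B.names

/-- `x:a` occurs in some formula of `Γ` (i.e. `Γ[x] = a` for sharing-free `Γ`). -/
def HasAtomS (Γ : Finset (NForm α)) (x : ℕ) (a : α) : Prop :=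
  ∃ A ∈ Γ, HasAtom A x a

/-- Branch sets of named formulas. -/
def BrF : NForm α → Set (Set ℕ)
  | .atom x _ => {{x}}
  | .or A B => {X | ∃ Y ∈ BrF A, ∃ Z ∈ BrF B, X = Y ∪ Z}
  | .and A B => BrF A ∪ BrF B

/-- Branch sets of sequents (finite sharing-free sets of named formulas). -/
def BrS (Γ : Finset (NForm α)) : Set (Set ℕ) :=
  {X | X ⊆ snames Γ ∧ ∀ A ∈ Γ, X ∩ A.names ∈ BrF A}

/-! ## Branch-labeled name graphs -/

/-- A branch-labeled name graph: vertices and a relation between unordered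
pairs of vertices and branch labels. -/
structure BLGraph : Type where
  verts : Set ℕ
  rel : Sym2 ℕ → Set ℕ → Prop

/-- Well-formedness of a bl-graph: related pairs consist of distinct vertices,
labels are sets of vertices, and each edge is included in its labels. -/
def BLGraph.IsBL (G : BLGraph) : Prop :=
  ∀ e X, G.rel e X → ¬ e.IsDiag ∧ X ⊆ G.verts ∧ ∀ v ∈ e, v ∈ X

def BLGraph.Edges (G : BLGraph) : Set (Sym2 ℕ) := {e | ∃ X, G.rel e X}

def BLGraph.Br (G : BLGraph) : Set (Set ℕ) := {X | ∃ e, G.rel e X}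

def BLGraph.union (G H : BLGraph) : BLGraph :=
  ⟨G.verts ∪ H.verts, fun e X => G.rel e X ∨ H.rel e X⟩

/-- Restriction `G↾_S` of a bl-graph. -/
def BLGraph.restrict (G : BLGraph) (S : Set ℕ) : BLGraph :=
  ⟨G.verts ∩ S, fun e X => G.rel e X ∧ X ⊆ S⟩

/-- The interface-relativized edge-branch relation `e ⊰^I_G X`. -/
def BLGraph.relI (G : BLGraph) (I : Set ℕ) (e : Sym2 ℕ) (X : Set ℕ) : Prop :=
  ∃ Y, G.rel e Y ∧ X = Y \ I

/-- `z 0, …, z (n-1)` is an `X`-labeled alternating path between `G` and `H`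
through the interface `I`. -/
def AltPath (G H : BLGraph) (I X : Set ℕ) (n : ℕ) (z : ℕ → ℕ) : Prop :=
  1 < n ∧
  (∀ i < n, ∀ j < n, z i = z j → i = j) ∧
  (∀ i, 0 < i → i + 1 < n → z i ∈ I) ∧
  ((∀ i, i + 1 < n →
      (Even i → G.relI I s(z i, z (i + 1)) X) ∧ (¬ Even i → H.relI I s(z i, z (i + 1)) X)) ∨
   (∀ i, i + 1 < n →
      (Even i → H.relI I s(z i, z (i + 1)) X) ∧ (¬ Even i → G.relI I s(z i, z (i + 1)) X)))

/-- Composition of bl-graphs over an interface `I`. -/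
def BLGraph.comp (G H : BLGraph) (I : Set ℕ) : BLGraph :=
  ⟨(G.verts ∪ H.verts) \ I,
   fun e X => ∃ n z, AltPath G H I X n z ∧ z 0 ∉ I ∧ z (n - 1) ∉ I ∧
     e = s(z 0, z (n - 1))⟩

/-- The weakening operator on bl-graphs: add vertices `V` and extend every
branch label by a member of `Brs`. -/
def blwk (V : Set ℕ) (Brs : Set (Set ℕ)) (G : BLGraph) : BLGraph :=
  ⟨G.verts ∪ V, fun e X => ∃ Y Z, G.rel e Y ∧ Z ∈ Brs ∧ X = Y ∪ Z⟩

/-- The bl-identity graph `id_{A,C}` on a pair of dual formulas. -/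
def blid : NForm α → NForm α → BLGraph
  | .atom x _, .atom y _ => ⟨{x, y}, fun e X => e = s(x, y) ∧ X = {x, y}⟩
  | .or A1 A2, .and C1 C2 =>
      (blwk A2.names (BrF A2) (blid A1 C1)).union (blwk A1.names (BrF A1) (blid A2 C2))
  | .and A1 A2, .or C1 C2 =>
      (blwk C2.names (BrF C2) (blid A1 C1)).union (blwk C1.names (BrF C1) (blid A2 C2))
  | _, _ => ⟨∅, fun _ _ => False⟩

/-! ## Simple name graphs -/

/-- A simple name graph. -/
structure NGraph : Type where
  verts : Set ℕ
  edges : Set (Sym2 ℕ)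

/-- Subgraph relation `H ⊑ G`. -/
def NGraph.Sub (H G : NGraph) : Prop := H.verts ⊆ G.verts ∧ H.edges ⊆ G.edges

def NGraph.union (G H : NGraph) : NGraph := ⟨G.verts ∪ H.verts, G.edges ∪ H.edges⟩

/-- Induced subgraph `G↾_S`. -/
def NGraph.restrict (G : NGraph) (S : Set ℕ) : NGraph :=
  ⟨G.verts ∩ S, {e ∈ G.edges | ∀ v ∈ e, v ∈ S}⟩

/-- Alternating paths between simple name graphs through an interface. -/
def NAltPath (G H : NGraph) (I : Set ℕ) (n : ℕ) (z : ℕ → ℕ) : Prop :=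
  0 < n ∧
  (∀ i < n, ∀ j < n, z i = z j → i = j) ∧
  (∀ i, 0 < i → i + 1 < n → z i ∈ I) ∧
  ((∀ i, i + 1 < n →
      (Even i → s(z i, z (i + 1)) ∈ G.edges) ∧ (¬ Even i → s(z i, z (i + 1)) ∈ H.edges)) ∨
   (∀ i, i + 1 < n →
      (Even i → s(z i, z (i + 1)) ∈ H.edges) ∧ (¬ Even i → s(z i, z (i + 1)) ∈ G.edges)))

/-- Composition of simple name graphs over an interface. -/
def NGraph.comp (G H : NGraph) (I : Set ℕ) : NGraph :=
  ⟨(G.verts ∪ H.verts) \ I,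
   {e | ∃ x y, x ≠ y ∧ x ∈ (G.verts ∪ H.verts) \ I ∧ y ∈ (G.verts ∪ H.verts) \ I ∧
        e = s(x, y) ∧ ∃ n z, NAltPath G H I n z ∧ z 0 = x ∧ z (n - 1) = y}⟩

/-- The identity graph `Id_{A,C}` on a pair of dual formulas. -/
def idg : NForm α → NForm α → NGraph
  | .atom x _, .atom y _ => ⟨{x, y}, {s(x, y)}⟩
  | .or A1 A2, .and C1 C2 => (idg A1 C1).union (idg A2 C2)
  | .and A1 A2, .or C1 C2 => (idg A1 C1).union (idg A2 C2)
  | _, _ => ⟨∅, ∅⟩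

/-- The edgeless (weakening) graph on the names of `Γ`. -/
def wkg (Γ : Finset (NForm α)) : NGraph := ⟨snames Γ, ∅⟩

/-! ## Named GS4 derivations -/

/-- Named GS4 derivation trees. -/
inductive Deriv (α : Type) : Type
  | ax (Γ : Finset (NForm α)) (A C : NForm α)
  | cut (A : NForm α) (P Q : Deriv α)
  | sup (P Q : Deriv α)
  | orI (A B : NForm α) (P : Deriv α)
  | andI (A B : NForm α) (P Q : Deriv α)

/-- Conclusion of a derivation tree. -/
def concl : Deriv α → Finset (NForm α)
  | .ax Γ A C => insert A (insert C Γ)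
  | .cut A P _ => (concl P).erase A
  | .sup P _ => concl P
  | .orI A B P => insert (NForm.or A B) (((concl P).erase A).erase B)
  | .andI A B P _ => insert (NForm.and A B) ((concl P).erase A)

/-- Well-formedness of derivation trees w.r.t. the atom involution `bar`:
each rule is applied correctly to sharing-free named sequents. -/
def WF (bar : α → α) : Deriv α → Prop
  | .ax Γ A C =>
      A.shape = (negF bar C).shape ∧
      A.sharingFree ∧ C.sharingFree ∧ SFSet Γ ∧
      Disjoint A.names C.names ∧
      Disjoint A.names (snames Γ) ∧ Disjoint C.names (snames Γ)
  | .cut A P Q =>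
      WF bar P ∧ WF bar Q ∧
      ∃ Γ : Finset (NForm α), A ∉ Γ ∧ negF bar A ∉ Γ ∧
        concl P = insert A Γ ∧ concl Q = insert (negF bar A) Γ ∧
        A.sharingFree ∧ SFSet Γ ∧ Disjoint A.names (snames Γ)
  | .sup P Q => WF bar P ∧ WF bar Q ∧ concl P = concl Q
  | .orI A B P =>
      WF bar P ∧
      ∃ Γ : Finset (NForm α), A ∉ Γ ∧ B ∉ Γ ∧ A ≠ B ∧
        concl P = insert A (insert B Γ) ∧
        A.sharingFree ∧ B.sharingFree ∧ SFSet Γ ∧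
        Disjoint A.names B.names ∧
        Disjoint A.names (snames Γ) ∧ Disjoint B.names (snames Γ)
  | .andI A B P Q =>
      WF bar P ∧ WF bar Q ∧
      ∃ Γ : Finset (NForm α), A ∉ Γ ∧ B ∉ Γ ∧
        concl P = insert A Γ ∧ concl Q = insert B Γ ∧
        A.sharingFree ∧ B.sharingFree ∧ SFSet Γ ∧
        Disjoint A.names B.names ∧
        Disjoint A.names (snames Γ) ∧ Disjoint B.names (snames Γ)

/-- A derivation is cut-free if it contains no cut rule. -/
def CutFree : Deriv α → Prop
  | .ax _ _ _ => True
  | .cut _ _ _ => False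
  | .sup P Q => CutFree P ∧ CutFree Q
  | .orI _ _ P => CutFree P
  | .andI _ _ P Q => CutFree P ∧ CutFree Q

/-- The branch-labeled axiom graph `⟨⟨P⟩⟩` of a derivation. -/
def blaxg : Deriv α → BLGraph
  | .ax Γ A C => blwk (snames Γ) (BrS Γ) (blid A C)
  | .cut A P Q => BLGraph.comp (blaxg P) (blaxg Q) A.names
  | .sup P Q => (blaxg P).union (blaxg Q)
  | .orI _ _ P => blaxg P
  | .andI _ _ P Q => (blaxg P).union (blaxg Q)

/-- The (simple) axiom graph `⟦P⟧` of a derivation. -/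
def axg : Deriv α → NGraph
  | .ax Γ A C => (wkg Γ).union (idg A C)
  | .cut A P Q => NGraph.comp (axg P) (axg Q) A.names
  | .sup P Q => (axg P).union (axg Q)
  | .orI _ _ P => axg P
  | .andI _ _ P Q => (axg P).union (axg Q)

/-! ## Inversion and isolation -/

/-- Inversion of a disjunction `D ∨ E` in the conclusion. -/
def inv (D E : NForm α) : Deriv α → Deriv α
  | .ax Γ A C =>
      if A = NForm.or D E then
        match C with
        | .and C1 C2 =>
            .andI C1 C2 (.ax (insert E Γ) D C1) (.ax (insert D Γ) E C2)
        | _ => .ax Γ A C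
      else if C = NForm.or D E then
        match A with
        | .and A1 A2 =>
            .andI A1 A2 (.ax (insert E Γ) A1 D) (.ax (insert D Γ) A2 E)
        | _ => .ax Γ A C
      else
        .ax (insert D (insert E (Γ.erase (NForm.or D E)))) A C
  | .cut A P Q => .cut A (inv D E P) (inv D E Q)
  | .sup P Q => .sup (inv D E P) (inv D E Q)
  | .orI A B P => if A = D ∧ B = E then P else .orI A B (inv D E P)
  | .andI A B P Q => .andI A B (inv D E P) (inv D E Q)

/-- Left inversion of a conjunction `D ∧ E` in the conclusion. -/
def invl (D E : NForm α) : Deriv α → Deriv α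
  | .ax Γ A C =>
      if A = NForm.and D E then
        match C with
        | .or C1 C2 => .orI C1 C2 (.ax (insert C2 Γ) D C1)
        | _ => .ax Γ A C
      else if C = NForm.and D E then
        match A with
        | .or A1 A2 => .orI A1 A2 (.ax (insert A2 Γ) A1 D)
        | _ => .ax Γ A C
      else
        .ax (insert D (Γ.erase (NForm.and D E))) A C
  | .cut A P Q => .cut A (invl D E P) (invl D E Q)
  | .sup P Q => .sup (invl D E P) (invl D E Q)
  | .orI A B P => .orI A B (invl D E P)
  | .andI A B P Q => if A = D ∧ B = E then P else .andI A B (invl D E P) (invl D E Q)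

/-- Right inversion of a conjunction `D ∧ E` in the conclusion. -/
def invr (D E : NForm α) : Deriv α → Deriv α
  | .ax Γ A C =>
      if A = NForm.and D E then
        match C with
        | .or C1 C2 => .orI C1 C2 (.ax (insert C1 Γ) E C2)
        | _ => .ax Γ A C
      else if C = NForm.and D E then
        match A with
        | .or A1 A2 => .orI A1 A2 (.ax (insert A1 Γ) A2 E)
        | _ => .ax Γ A C
      else
        .ax (insert E (Γ.erase (NForm.and D E))) A C
  | .cut A P Q => .cut A (invr D E P) (invr D E Q)
  | .sup P Q => .sup (invr D E P) (invr D E Q)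
  | .orI A B P => .orI A B (invr D E P)
  | .andI A B P Q => if A = D ∧ B = E then Q else .andI A B (invr D E P) (invr D E Q)

/-- Isolation of a non-atomic formula in the conclusion. -/
def isl : NForm α → Deriv α → Deriv α
  | .or A B, P => .orI A B (inv A B P)
  | .and A B, P => .andI A B (invl A B P) (invr A B P)
  | .atom _ _, P => P

/-- Totality of a bl-graph w.r.t. a sharing-free named sequent. -/
def Total (bar : α → α) (G : BLGraph) (Γ : Finset (NForm α)) : Prop :=
  G.verts = snames Γ ∧
  G.Br = BrS Γ ∧
  ∀ x y : ℕ, s(x, y) ∈ G.Edges →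
    ∀ a b : α, HasAtomS Γ x a → HasAtomS Γ y b → a = bar b

end GS4

/-! Induct on the number of connectives of `Γ`, reading the rules bottom-up. Branch sets are
compositional: if `A` shares no name with `Γ`, the branches of `Γ, A` are the unions of a branch
of `A` with a branch of `Γ`. Hence `Γ, A ∨ B` and `Γ, A, B` have the same branches, so the same
graphs are total for both, and the branches of `Γ, A ∧ B` are those of `Γ, A` together with those of
`Γ, B`, so a graph total for the former is the union of its restrictions to the names of the latter
two. A sequent of atoms has a single branch, the set of all its names; a total graph is then a
nonempty finite set of edges between dual atoms, each of which is an axiom, and superposition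
assembles them. -/

open scoped SetFamily

namespace GS4

variable {α : Type} {bar : α → α} {A B : NForm α} {Γ Δ : Finset (NForm α)} {G H : BLGraph}

section Names

theorem NForm.names_nonempty (A : NForm α) : A.names.Nonempty := by
  induction A with
  | atom x => exact Set.singleton_nonempty x
  | or A B ihA _ => exact ihA.inl
  | and A B ihA _ => exact ihA.inl

theorem NForm.finite_names (A : NForm α) : A.names.Finite := by
  induction A with
  | atom x => exact Set.finite_singleton x
  | or A B ihA ihB => exact ihA.union ihB
  | and A B ihA ihB => exact ihA.union ihB

theorem NForm.mem_names_iff {x : ℕ} : x ∈ A.names ↔ ∃ a, HasAtom A x a := by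
  induction A with
  | atom y b => simp [names, HasAtom, eq_comm]
  | or A B ihA ihB => simp [names, HasAtom, ihA, ihB, exists_or]
  | and A B ihA ihB => simp [names, HasAtom, ihA, ihB, exists_or]

theorem finite_snames (Γ : Finset (NForm α)) : (snames Γ).Finite :=
  Γ.finite_toSet.biUnion fun A _ => A.finite_names

theorem names_subset_snames (hA : A ∈ Γ) : A.names ⊆ snames Γ :=
  Set.subset_biUnion_of_mem (u := fun A : NForm α => A.names) hA

theorem snames_insert (A : NForm α) (Γ : Finset (NForm α)) :
    snames (insert A Γ) = A.names ∪ snames Γ :=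
  Finset.set_biUnion_insert A Γ NForm.names

theorem notMem_of_disjoint_snames (h : Disjoint A.names (snames Γ)) : A ∉ Γ := fun hA =>
  A.names_nonempty.ne_empty <| disjoint_self.1 <| h.mono_right <| names_subset_snames hA

theorem hasAtomS_insert {x : ℕ} {a : α} :
    HasAtomS (insert A Γ) x a ↔ HasAtom A x a ∨ HasAtomS Γ x a :=
  Finset.exists_mem_insert _ _ _

theorem mem_snames_iff {x : ℕ} : x ∈ snames Γ ↔ ∃ a, HasAtomS Γ x a := by
  simp only [snames, Set.mem_iUnion₂, NForm.mem_names_iff, HasAtomS]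
  tauto

theorem HasAtomS.atom_mem {x : ℕ} {a : α} (h : HasAtomS Γ x a) (hat : ∀ A ∈ Γ, A.isAtom) :
    .atom x a ∈ Γ := by
  obtain ⟨A, hA, hxa⟩ := h
  cases A with
  | atom y b =>
    obtain ⟨rfl, rfl⟩ := hxa
    exact hA
  | or B C => exact (hat _ hA).elim
  | and B C => exact (hat _ hA).elim

end Names

section SharingFree

theorem sfSet_insert (hA : A ∉ Γ) :
    SFSet (insert A Γ) ↔ A.sharingFree ∧ SFSet Γ ∧ Disjoint A.names (snames Γ) := by
  have hne : ∀ B ∈ Γ, A ≠ B := fun B hB h => hA (h ▸ hB)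
  simp only [SFSet, Finset.forall_mem_insert, snames, Set.disjoint_iUnion₂_right]
  constructor
  · rintro ⟨⟨hAsf, hΓsf⟩, ⟨-, hAΓ⟩, hΓ⟩
    exact ⟨hAsf, ⟨hΓsf, fun B hB => (hΓ B hB).2⟩, fun B hB => hAΓ B hB (hne B hB)⟩
  · rintro ⟨hAsf, ⟨hΓsf, hΓ⟩, hAΓ⟩
    exact ⟨⟨hAsf, hΓsf⟩, ⟨fun h => absurd rfl h, fun B hB _ => hAΓ B hB⟩,
      fun B hB => ⟨fun _ => (hAΓ B hB).symm, hΓ B hB⟩⟩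

/-- `SFPair A B Γ`: the formulas `A`, `B` and the elements of `Γ` are sharing-free and have pairwise
disjoint names, so that `⊢ Γ, A, B` is a named sequent in which `A` and `B` are distinct and not in
`Γ`. This is the common side condition of the axiom, disjunction and conjunction rules. -/
structure SFPair (A B : NForm α) (Γ : Finset (NForm α)) : Prop where
  left : A.sharingFree
  right : B.sharingFree
  context : SFSet Γ
  disjoint : Disjoint A.names B.names
  left_context : Disjoint A.names (snames Γ)
  right_context : Disjoint B.names (snames Γ)

namespace SFPair

theorem symm (h : SFPair A B Γ) : SFPair B A Γ :=
  ⟨h.right, h.left, h.context, h.disjoint.symm, h.right_context, h.left_context⟩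

theorem left_notMem (h : SFPair A B Γ) : A ∉ Γ := notMem_of_disjoint_snames h.left_context

theorem disjoint_snames_insert (h : SFPair A B Γ) : Disjoint A.names (snames (insert B Γ)) := by
  rw [snames_insert]
  exact h.disjoint.union_right h.left_context

theorem left_notMem_insert (h : SFPair A B Γ) : A ∉ insert B Γ :=
  notMem_of_disjoint_snames h.disjoint_snames_insert

theorem sfSet_left (h : SFPair A B Γ) : SFSet (insert A Γ) :=
  (sfSet_insert h.left_notMem).2 ⟨h.left, h.context, h.left_context⟩

theorem sfSet (h : SFPair A B Γ) : SFSet (insert A (insert B Γ)) :=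
  (sfSet_insert h.left_notMem_insert).2 ⟨h.left, h.symm.sfSet_left, h.disjoint_snames_insert⟩

theorem of_sfSet (hA : A ∉ insert B Γ) (hB : B ∉ Γ) (h : SFSet (insert A (insert B Γ))) :
    SFPair A B Γ := by
  obtain ⟨hAsf, hBΓ, hd⟩ := (sfSet_insert hA).1 h
  obtain ⟨hBsf, hΓ, hBd⟩ := (sfSet_insert hB).1 hBΓ
  rw [snames_insert, Set.disjoint_union_right] at hd
  exact ⟨hAsf, hBsf, hΓ, hd.1, hd.2, hBd⟩

theorem of_disjoint_union (hAB : A.sharingFree ∧ B.sharingFree ∧ Disjoint A.names B.names)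
    (hΓ : SFSet Γ) (hd : Disjoint (A.names ∪ B.names) (snames Γ)) : SFPair A B Γ :=
  let ⟨hA, hB, hdisj⟩ := hAB
  let ⟨hAΓ, hBΓ⟩ := Set.disjoint_union_left.1 hd
  ⟨hA, hB, hΓ, hdisj, hAΓ, hBΓ⟩

end SFPair

theorem SFSet.exists_sfPair (h : SFSet Γ) (hA : A ∈ Γ) (hB : B ∈ Γ) (hne : A ≠ B) :
    ∃ Δ, SFPair A B Δ ∧ insert A (insert B Δ) = Γ := by
  have hBA : B ∈ Γ.erase A := Finset.mem_erase.2 ⟨hne.symm, hB⟩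
  refine ⟨(Γ.erase A).erase B, .of_sfSet ?_ (Finset.notMem_erase _ _) ?_, ?_⟩
  · rw [Finset.insert_erase hBA]
    exact Finset.notMem_erase _ _
  · rwa [Finset.insert_erase hBA, Finset.insert_erase hA]
  · rw [Finset.insert_erase hBA, Finset.insert_erase hA]

/-- The number of connectives of a named formula, which the premises of the logical rules
decrease. -/
def NForm.connectives : NForm α → ℕ
  | .atom _ _ => 0
  | .or A B => A.connectives + B.connectives + 1
  | .and A B => A.connectives + B.connectives + 1

theorem SFSet.induction {motive : ∀ Γ : Finset (NForm α), SFSet Γ → Prop}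
    (atoms : ∀ Γ (hΓ : SFSet Γ), (∀ A ∈ Γ, A.isAtom) → motive Γ hΓ)
    (or : ∀ A B Γ (h : SFPair A B Γ) (hF : SFSet (insert (A.or B) Γ)),
      motive (insert A (insert B Γ)) h.sfSet → motive (insert (A.or B) Γ) hF)
    (and : ∀ A B Γ (h : SFPair A B Γ) (hF : SFSet (insert (A.and B) Γ)),
      motive (insert A Γ) h.sfSet_left → motive (insert B Γ) h.symm.sfSet_left →
      motive (insert (A.and B) Γ) hF)
    (Γ : Finset (NForm α)) (hΓ : SFSet Γ) : motive Γ hΓ := by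
  induction hn : ∑ A ∈ Γ, A.connectives using Nat.strong_induction_on generalizing Γ with
  | _ n ih =>
  by_cases hat : ∀ A ∈ Γ, A.isAtom
  · exact atoms Γ hΓ hat
  push Not at hat
  obtain ⟨F, hF, hFat⟩ := hat
  obtain ⟨Δ, hFΔ, rfl⟩ : ∃ Δ, F ∉ Δ ∧ insert F Δ = Γ :=
    ⟨Γ.erase F, Finset.notMem_erase _ _, Finset.insert_erase hF⟩
  rw [Finset.sum_insert hFΔ] at hn
  obtain ⟨hFsf, hΔ, hFd⟩ := (sfSet_insert hFΔ).1 hΓ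
  cases F with
  | atom x a => exact absurd trivial hFat
  | or A B =>
    have h : SFPair A B Δ := .of_disjoint_union hFsf hΔ hFd
    refine or A B Δ h hΓ (ih _ ?_ _ h.sfSet rfl)
    rw [Finset.sum_insert h.left_notMem_insert, Finset.sum_insert h.symm.left_notMem]
    grind [NForm.connectives]
  | and A B =>
    have h : SFPair A B Δ := .of_disjoint_union hFsf hΔ hFd
    refine and A B Δ h hΓ (ih _ ?_ _ h.sfSet_left rfl) (ih _ ?_ _ h.symm.sfSet_left rfl)
    · rw [Finset.sum_insert h.left_notMem]
      grind [NForm.connectives]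
    · rw [Finset.sum_insert h.symm.left_notMem]
      grind [NForm.connectives]

end SharingFree

section Branches

theorem BrF_or (A B : NForm α) : BrF (A.or B) = BrF A ⊻ BrF B := by
  ext X
  simp only [BrF, Set.mem_ofPred_eq, Set.mem_sups, Set.sup_eq_union, eq_comm]

theorem subset_names_of_mem_BrF {X : Set ℕ} (hX : X ∈ BrF A) : X ⊆ A.names := by
  induction A generalizing X with
  | atom x a => exact (Set.mem_singleton_iff.1 hX).subset
  | or A B ihA ihB =>
    obtain ⟨Y, hY, Z, hZ, rfl⟩ := hX
    exact Set.union_subset_union (ihA hY) (ihB hZ)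
  | and A B ihA ihB =>
    rcases hX with hX | hX
    · exact (ihA hX).trans Set.subset_union_left
    · exact (ihB hX).trans Set.subset_union_right

theorem nonempty_of_mem_BrF {X : Set ℕ} (hX : X ∈ BrF A) : X.Nonempty := by
  induction A generalizing X with
  | atom x a => exact hX ▸ Set.singleton_nonempty x
  | or A B ihA _ =>
    obtain ⟨Y, hY, Z, -, rfl⟩ := hX
    exact (ihA hY).inl
  | and A B ihA ihB => exact hX.elim ihA ihB

theorem BrF_eq_singleton_of_isAtom (hA : A.isAtom) : BrF A = {A.names} := by
  cases A with
  | atom x a => rfl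
  | or A B => exact hA.elim
  | and A B => exact hA.elim

theorem BrS_insert (h : Disjoint A.names (snames Γ)) : BrS (insert A Γ) = BrF A ⊻ BrS Γ := by
  ext X
  simp only [BrS, snames_insert, Finset.forall_mem_insert, Set.mem_sups, Set.sup_eq_union,
    Set.mem_ofPred_eq]
  constructor
  · rintro ⟨hX, hXA, hXΓ⟩
    refine ⟨X ∩ A.names, hXA, X ∩ snames Γ, ⟨Set.inter_subset_right, fun B hB => ?_⟩, ?_⟩
    · rw [Set.inter_assoc, Set.inter_eq_right.2 (names_subset_snames hB)]
      exact hXΓ B hB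
    · rw [← Set.inter_union_distrib_left, Set.inter_eq_left.2 hX]
  · rintro ⟨Y, hY, Z, ⟨hZ, hZΓ⟩, rfl⟩
    have hYA := subset_names_of_mem_BrF hY
    refine ⟨Set.union_subset_union hYA hZ, ?_, fun B hB => ?_⟩
    · rwa [Set.union_inter_distrib_right, (h.symm.mono_left hZ).inter_eq, Set.union_empty,
        Set.inter_eq_left.2 hYA]
    · rw [Set.union_inter_distrib_right, (h.mono hYA (names_subset_snames hB)).inter_eq,
        Set.empty_union]
      exact hZΓ B hB

theorem SFPair.BrS_insert_or (h : SFPair A B Γ) :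
    BrS (insert (A.or B) Γ) = BrS (insert A (insert B Γ)) := by
  have hAB : Disjoint (A.or B).names (snames Γ) := h.left_context.union_left h.right_context
  rw [BrS_insert hAB, BrS_insert h.disjoint_snames_insert, BrS_insert h.right_context, BrF_or,
    Set.sups_assoc]

theorem SFPair.BrS_insert_and (h : SFPair A B Γ) :
    BrS (insert (A.and B) Γ) = BrS (insert A Γ) ∪ BrS (insert B Γ) := by
  have hAB : Disjoint (A.and B).names (snames Γ) := h.left_context.union_left h.right_context
  rw [BrS_insert hAB, BrS_insert h.left_context, BrS_insert h.right_context, BrF,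
    Set.sups_union_left]

theorem SFPair.not_subset_of_mem_BrS_insert_right (h : SFPair A B Γ) {X : Set ℕ}
    (hX : X ∈ BrS (insert B Γ)) : ¬ X ⊆ snames (insert A Γ) := by
  obtain ⟨x, hxX, hxB⟩ := nonempty_of_mem_BrF (hX.2 B (Finset.mem_insert_self B Γ))
  have hd : Disjoint B.names (snames (insert A Γ)) := h.symm.disjoint_snames_insert
  exact fun hs => Set.disjoint_left.1 hd hxB (hs hxX)

theorem SFPair.sep_BrS_insert_union (h : SFPair A B Γ) :
    {X ∈ BrS (insert A Γ) ∪ BrS (insert B Γ) | X ⊆ snames (insert A Γ)} = BrS (insert A Γ) :=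
  Set.Subset.antisymm
    (fun _ hX => hX.1.resolve_right fun hB => h.not_subset_of_mem_BrS_insert_right hB hX.2)
    fun _ hX => ⟨.inl hX, hX.1⟩

theorem BrS_eq_singleton_of_forall_isAtom (hΓ : ∀ A ∈ Γ, A.isAtom) : BrS Γ = {snames Γ} := by
  ext X
  have hbranch : (∀ A ∈ Γ, X ∩ A.names ∈ BrF A) ↔ snames Γ ⊆ X := by
    rw [snames, Set.iUnion₂_subset_iff]
    refine forall₂_congr fun A hA => ?_
    rw [BrF_eq_singleton_of_isAtom (hΓ A hA), Set.mem_singleton_iff, Set.inter_eq_right]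
  simp only [BrS, hbranch, Set.mem_ofPred_eq, Set.mem_singleton_iff, Set.Subset.antisymm_iff]

end Branches

section Graphs

namespace BLGraph

theorem ext (hv : G.verts = H.verts) (hr : ∀ e X, G.rel e X ↔ H.rel e X) : G = H := by
  cases G
  cases H
  simp only [mk.injEq]
  exact ⟨hv, funext₂ fun e X => propext (hr e X)⟩

theorem IsBL.restrict (hG : G.IsBL) (S : Set ℕ) : (G.restrict S).IsBL := fun e X h =>
  let ⟨hdiag, hverts, hmem⟩ := hG e X h.1
  ⟨hdiag, Set.subset_inter hverts h.2, hmem⟩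

theorem IsBL.mem_verts (hG : G.IsBL) {e : Sym2 ℕ} (he : e ∈ G.Edges) {x : ℕ} (hx : x ∈ e) :
    x ∈ G.verts :=
  let ⟨X, h⟩ := he
  let ⟨_, hverts, hmem⟩ := hG e X h
  hverts (hmem x hx)

theorem IsBL.ne (hG : G.IsBL) {x y : ℕ} (he : s(x, y) ∈ G.Edges) : x ≠ y :=
  let ⟨X, h⟩ := he
  (hG _ X h).1

theorem IsBL.finite_edges (hG : G.IsBL) (h : G.verts.Finite) : G.Edges.Finite := by
  refine (h.toFinset.sym2.finite_toSet).subset fun e he => ?_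
  exact Finset.mem_sym2_iff.2 fun x hx => h.mem_toFinset.2 (hG.mem_verts he hx)

theorem restrict_union_restrict {S T : Set ℕ} (hv : G.verts = S ∪ T)
    (hb : ∀ X ∈ G.Br, X ⊆ S ∨ X ⊆ T) : (G.restrict S).union (G.restrict T) = G := by
  refine BLGraph.ext ?_ fun e X => ?_
  · rw [union, restrict, restrict, ← Set.inter_union_distrib_left, ← hv, Set.inter_self]
  · exact and_or_left.symm.trans <| and_iff_left_of_imp fun h => hb X ⟨e, h⟩

/-- The bl-graph with vertices `V` whose edges `E` all lie on the single branch `V`. -/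
def singleBranch (V : Set ℕ) (E : Set (Sym2 ℕ)) : BLGraph :=
  ⟨V, fun e X => e ∈ E ∧ X = V⟩

theorem eq_singleBranch (h : G.Br ⊆ {G.verts}) : G = singleBranch G.verts G.Edges := by
  refine BLGraph.ext rfl fun e X => ⟨fun he => ⟨⟨X, he⟩, h ⟨e, he⟩⟩, ?_⟩
  rintro ⟨⟨Y, hY⟩, rfl⟩
  rwa [← Set.mem_singleton_iff.1 (h ⟨e, hY⟩)]

theorem singleBranch_union (V : Set ℕ) (E F : Set (Sym2 ℕ)) :
    singleBranch V (E ∪ F) = (singleBranch V E).union (singleBranch V F) :=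
  BLGraph.ext (Set.union_self V).symm fun _ _ => or_and_right

end BLGraph

theorem blwk_singleBranch (V W : Set ℕ) (E : Set (Sym2 ℕ)) :
    blwk V {V} (.singleBranch W E) = .singleBranch (W ∪ V) E := by
  refine BLGraph.ext rfl fun e X => ?_
  simp only [blwk, BLGraph.singleBranch, Set.mem_singleton_iff]
  grind

theorem blid_atom (x y : ℕ) (a b : α) :
    blid (.atom x a) (.atom y b) = .singleBranch {x, y} {s(x, y)} := rfl

end Graphs

section Totality

theorem Total.restrict (h : Total bar G Γ) (hatom : ∀ x a, HasAtomS Δ x a → HasAtomS Γ x a)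
    (hBr : {X ∈ BrS Γ | X ⊆ snames Δ} = BrS Δ) : Total bar (G.restrict (snames Δ)) Δ := by
  obtain ⟨hv, hb, hdual⟩ := h
  refine ⟨?_, ?_, ?_⟩
  · have hsub : snames Δ ⊆ snames Γ := fun x hx =>
      mem_snames_iff.2 <| (mem_snames_iff.1 hx).imp fun a => hatom x a
    rw [BLGraph.restrict, hv, Set.inter_eq_right.2 hsub]
  · rw [← hBr, ← hb]
    ext X
    exact exists_and_right
  · rintro x y ⟨X, hX, -⟩ a b ha hb
    exact hdual x y ⟨X, hX⟩ a b (hatom x a ha) (hatom y b hb)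

theorem SFPair.total_insert_or_iff (h : SFPair A B Γ) :
    Total bar G (insert (A.or B) Γ) ↔ Total bar G (insert A (insert B Γ)) := by
  simp only [Total, h.BrS_insert_or, snames_insert, NForm.names, Set.union_assoc, hasAtomS_insert,
    HasAtom, or_assoc]

theorem SFPair.total_restrict_left (h : SFPair A B Γ) (hG : Total bar G (insert (A.and B) Γ)) :
    Total bar (G.restrict (snames (insert A Γ))) (insert A Γ) := by
  refine hG.restrict (fun x a => ?_) (h.BrS_insert_and ▸ h.sep_BrS_insert_union)
  simpa only [hasAtomS_insert, HasAtom] using Or.imp_left Or.inl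

theorem SFPair.total_restrict_right (h : SFPair A B Γ) (hG : Total bar G (insert (A.and B) Γ)) :
    Total bar (G.restrict (snames (insert B Γ))) (insert B Γ) := by
  refine hG.restrict (fun x a => ?_) ?_
  · simpa only [hasAtomS_insert, HasAtom] using Or.imp_left Or.inr
  · rw [h.BrS_insert_and, Set.union_comm, h.symm.sep_BrS_insert_union]

theorem SFPair.restrict_union_restrict (h : SFPair A B Γ)
    (hG : Total bar G (insert (A.and B) Γ)) :
    (G.restrict (snames (insert A Γ))).union (G.restrict (snames (insert B Γ))) = G := by
  obtain ⟨hv, hb, -⟩ := hG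
  apply BLGraph.restrict_union_restrict
  · rw [hv, snames_insert, snames_insert, snames_insert, NForm.names, Set.union_union_distrib_right]
  · rw [hb, h.BrS_insert_and]
    exact fun X hX => hX.imp And.left And.left

end Totality

section Sequentialization

/-- `IsCutFreeAxiomGraph bar Γ G`: the bl-graph `G` is the axiom graph `⟨⟨P⟩⟩` of a cut-free
derivation `P` of `⊢ Γ`. The rules of GS4 become closure properties of this predicate. -/
def IsCutFreeAxiomGraph (bar : α → α) (Γ : Finset (NForm α)) (G : BLGraph) : Prop :=
  ∃ P : Deriv α, CutFree P ∧ WF bar P ∧ concl P = Γ ∧ blaxg P = G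

namespace IsCutFreeAxiomGraph

theorem ax (h : SFPair A B Γ) (hAB : A.shape = (negF bar B).shape) :
    IsCutFreeAxiomGraph bar (insert A (insert B Γ)) (blwk (snames Γ) (BrS Γ) (blid A B)) :=
  ⟨.ax Γ A B, trivial,
    ⟨hAB, h.left, h.right, h.context, h.disjoint, h.left_context, h.right_context⟩, rfl, rfl⟩

theorem sup (hG : IsCutFreeAxiomGraph bar Γ G) (hH : IsCutFreeAxiomGraph bar Γ H) :
    IsCutFreeAxiomGraph bar Γ (G.union H) := by
  obtain ⟨P, hP, hPwf, hPc, rfl⟩ := hG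
  obtain ⟨Q, hQ, hQwf, hQc, rfl⟩ := hH
  exact ⟨.sup P Q, ⟨hP, hQ⟩, ⟨hPwf, hQwf, hPc.trans hQc.symm⟩, hPc, rfl⟩

theorem or (h : SFPair A B Γ) (hG : IsCutFreeAxiomGraph bar (insert A (insert B Γ)) G) :
    IsCutFreeAxiomGraph bar (insert (A.or B) Γ) G := by
  obtain ⟨P, hP, hPwf, hPc, rfl⟩ := hG
  have hne : A ≠ B := fun e => h.left_notMem_insert (e ▸ Finset.mem_insert_self A Γ)
  refine ⟨.orI A B P, hP, ⟨hPwf, Γ, h.left_notMem, h.symm.left_notMem, hne, hPc, h.left, h.right,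
    h.context, h.disjoint, h.left_context, h.right_context⟩, ?_, rfl⟩
  rw [concl, hPc, Finset.erase_insert h.left_notMem_insert, Finset.erase_insert h.symm.left_notMem]

theorem and (h : SFPair A B Γ) (hG : IsCutFreeAxiomGraph bar (insert A Γ) G)
    (hH : IsCutFreeAxiomGraph bar (insert B Γ) H) :
    IsCutFreeAxiomGraph bar (insert (A.and B) Γ) (G.union H) := by
  obtain ⟨P, hP, hPwf, hPc, rfl⟩ := hG
  obtain ⟨Q, hQ, hQwf, hQc, rfl⟩ := hH
  refine ⟨.andI A B P Q, ⟨hP, hQ⟩, ⟨hPwf, hQwf, Γ, h.left_notMem, h.symm.left_notMem, hPc, hQc,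
    h.left, h.right, h.context, h.disjoint, h.left_context, h.right_context⟩, ?_, rfl⟩
  rw [concl, hPc, Finset.erase_insert h.left_notMem]

theorem singleBranch_singleton (hΓ : SFSet Γ) (hat : ∀ A ∈ Γ, A.isAtom) {x y : ℕ} {b : α}
    (hxy : x ≠ y) (hx : .atom x (bar b) ∈ Γ) (hy : .atom y b ∈ Γ) :
    IsCutFreeAxiomGraph bar Γ (.singleBranch (snames Γ) {s(x, y)}) := by
  have hne : NForm.atom x (bar b) ≠ .atom y b := fun h => hxy (NForm.atom.inj h).1
  obtain ⟨Δ, h, rfl⟩ := hΓ.exists_sfPair hx hy hne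
  have hatΔ : ∀ A ∈ Δ, A.isAtom := fun A hA => by simp [hat, hA]
  have hnames : {x, y} ∪ snames Δ =
      snames (insert (.atom x (bar b)) (insert (.atom y b) Δ)) := by
    rw [snames_insert, snames_insert, ← Set.union_assoc]
    rfl
  have hax := ax (bar := bar) h rfl
  rwa [BrS_eq_singleton_of_forall_isAtom hatΔ, blid_atom, blwk_singleBranch, hnames] at hax

theorem singleBranch {V : Set ℕ} {E : Set (Sym2 ℕ)} (hfin : E.Finite) (hne : E.Nonempty)
    (hE : ∀ e ∈ E, IsCutFreeAxiomGraph bar Γ (.singleBranch V {e})) :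
    IsCutFreeAxiomGraph bar Γ (.singleBranch V E) := by
  induction E, hfin using Set.Finite.induction_on with
  | empty => exact absurd hne Set.not_nonempty_empty
  | @insert e E _ _ ih =>
    obtain ⟨he, hE⟩ := Set.forall_mem_insert.1 hE
    rcases E.eq_empty_or_nonempty with rfl | hne
    · rwa [insert_empty_eq]
    · rw [Set.insert_eq, BLGraph.singleBranch_union]
      exact he.sup (ih hne hE)

theorem of_total_of_forall_isAtom (hΓ : SFSet Γ) (hat : ∀ A ∈ Γ, A.isAtom) (hG : G.IsBL)
    (htot : Total bar G Γ) : IsCutFreeAxiomGraph bar Γ G := by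
  obtain ⟨hv, hb, hdual⟩ := htot
  rw [BrS_eq_singleton_of_forall_isAtom hat] at hb
  have hfin : G.Edges.Finite := hG.finite_edges (hv ▸ finite_snames Γ)
  have hne : G.Edges.Nonempty :=
    let ⟨e, he⟩ : snames Γ ∈ G.Br := hb ▸ rfl
    ⟨e, _, he⟩
  have hedge : ∀ e ∈ G.Edges, IsCutFreeAxiomGraph bar Γ (.singleBranch (snames Γ) {e}) := by
    intro e he
    induction e using Sym2.ind with
    | _ x y =>
    obtain ⟨a, hx⟩ := mem_snames_iff.1 (hv ▸ hG.mem_verts he (Sym2.mem_mk_left x y))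
    obtain ⟨b, hy⟩ := mem_snames_iff.1 (hv ▸ hG.mem_verts he (Sym2.mem_mk_right x y))
    obtain rfl : a = bar b := hdual x y he a b hx hy
    exact singleBranch_singleton hΓ hat (hG.ne he) (hx.atom_mem hat) (hy.atom_mem hat)
  have hGs : G = .singleBranch (snames Γ) G.Edges := hv ▸ BLGraph.eq_singleBranch (hv ▸ hb.subset)
  exact hGs ▸ singleBranch hfin hne hedge

end IsCutFreeAxiomGraph

theorem sequentialization_general (bar : α → α) (Γ : Finset (NForm α)) (hΓ : SFSet Γ)
    (G : BLGraph) (hG : G.IsBL) (htot : Total bar G Γ) :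
    ∃ P : Deriv α, CutFree P ∧ WF bar P ∧ concl P = Γ ∧ blaxg P = G := by
  change IsCutFreeAxiomGraph bar Γ G
  induction Γ, hΓ using SFSet.induction generalizing G with
  | atoms Γ hΓ hat => exact .of_total_of_forall_isAtom hΓ hat hG htot
  | or A B Γ h _ ih => exact .or h (ih G hG (h.total_insert_or_iff.1 htot))
  | and A B Γ h _ ihA ihB =>
    rw [← h.restrict_union_restrict htot]
    exact .and h (ihA _ (hG.restrict _) (h.total_restrict_left htot))
      (ihB _ (hG.restrict _) (h.total_restrict_right htot))

end Sequentialization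

end GS4

/-- Sequentialization: every bl-graph total w.r.t. a sharing-free
named sequent is the branch-labeled axiom graph of some derivation of it. -/
theorem GS4.sequentialization {α : Type} (bar : α → α)
    (hbar : Function.Involutive bar) (hfix : ∀ a, bar a ≠ a)
    (Γ : Finset (GS4.NForm α)) (hΓ : GS4.SFSet Γ)
    (G : GS4.BLGraph) (hG : G.IsBL) (htot : GS4.Total bar G Γ) :
    ∃ P : GS4.Deriv α, GS4.WF bar P ∧ GS4.concl P = Γ ∧ GS4.blaxg P = G := by
  obtain ⟨P, -, hP⟩ := GS4.sequentialization_general bar Γ hΓ G hG htot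
  exact ⟨P, hP⟩
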